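/- Let η₁, η₂, ε > 0 and μ(t) = (2/π) e^t (π/2 + arctan t), and consider the planar system x' = −η₁ (μ'(t)/μ(t)) x + ε sin(x + t), y' = η₂ (μ'(t)/μ(t)) y + ε cos(x + t). Its nonlinearity f(t,(x,y)) = (ε sin(x+t), ε cos(x+t)) satisfies ‖f(t,z)‖ ≤ 2ε μ'(t)/μ(t) and ‖f(t,z₁) − f(t,z₂)‖ ≤ 2ε (μ'(t)/μ(t)) ‖z₁ − z₂‖ for all t, z, z₁, z₂. Consequently, if 0 < ε < η₃/8 with η₃ = max{η₁, η₂}, this system is topologically conjugate to its linear part x' = −η₁ (μ'(t)/μ(t)) x, y' = η₂ (μ'(t)/μ(t)) y: there exists H : ℝ × ℝ² → ℝ² such that for each t, H(t,·) is a homeomorphism of ℝ², ‖H(t,z) − z‖ and ‖H⁻¹(t,z) − z‖ are uniformly bounded, H carries solutions of the nonlinear system to solutions of the linear part, and H⁻¹ carries solutions of the linear part to solutions of the nonlinear system. -/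

import Mathlib

open MeasureTheory Filter Set

/-!
Write the first equation as `x' = -a'(t) x + g(x + t)`. Subtracting from each solution `x` the
bounded response to the force felt along it, and likewise for `y`, turns solutions of the nonlinear
system into solutions of the linear one. The only delicate point is that this straightening of `x`
is injective. Solutions `x₁ < x₂` with the same image stay, for all time, within a bounded distance
of one common linear solution `c exp(-a)`.

If `c = 0`, both are bounded as `t → -∞`. The force does not change when `x₂` is replaced by the
slid curve `x₂(t - σ) - σ`, which therefore solves the same equation up to the slow drift of `a'`
and an extra push `-a' σ`. Whenever the slid curve lies below `x₁`, that push keeps it below by an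
amount proportional to `σ`, so the least admissible `σ` is `0`, and `x₂ ≤ x₁`.

If `c ≠ 0`, the phase `x + t` moves exponentially fast as `t → -∞`, so the force averages out: the
gap `x₂ - x₁`, suitably corrected, decays at a positive rate, and would be unbounded as `t → -∞`.
-/

open scoped NNReal Topology

section ODE

variable {E : Type*} [NormedAddCommGroup E] [NormedSpace ℝ E]

lemma norm_le_mul_exp_of_norm_deriv_le {d d' : ℝ → E} {K : ℝ}
    (hd : ∀ t, HasDerivAt d (d' t) t) (hK : ∀ t, ‖d' t‖ ≤ K * ‖d t‖) (s t : ℝ) :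
    ‖d s‖ ≤ ‖d t‖ * Real.exp (K * |s - t|) := by
  have forward : ∀ {e e' : ℝ → E}, (∀ t, HasDerivAt e (e' t) t) → (∀ t, ‖e' t‖ ≤ K * ‖e t‖) →
      ∀ {t s : ℝ}, t ≤ s → ‖e s‖ ≤ ‖e t‖ * Real.exp (K * (s - t)) := by
    intro e e' he heK t s hts
    rw [← gronwallBound_ε0]
    exact norm_le_gronwallBound_of_norm_deriv_right_le
      (fun r _ ↦ (he r).continuousAt.continuousWithinAt) (fun r _ ↦ (he r).hasDerivWithinAt)
      le_rfl (fun r _ ↦ (heK r).trans_eq (add_zero _).symm) s ⟨hts, le_rfl⟩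
  rcases le_total t s with hts | hst
  · rw [abs_of_nonneg (sub_nonneg.2 hts)]
    exact forward hd hK hts
  · rw [abs_of_nonpos (sub_nonpos.2 hst)]
    have hrev : ∀ r, HasDerivAt (fun r ↦ d (-r)) (-d' (-r)) r := fun r ↦ by
      simpa [Function.comp_def] using (hd (-r)).scomp r (hasDerivAt_neg r)
    have h := forward hrev (fun r ↦ (norm_neg _).trans_le (hK _)) (neg_le_neg hst)
    simpa only [neg_neg, sub_neg_eq_add, neg_sub, neg_add_eq_sub] using h

lemma exists_hasDerivAt_Ioo_of_lipschitzWith [CompleteSpace E] {v : ℝ → E → E} {K : ℝ≥0}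
    {B : ℝ → ℝ}
    (hv : ∀ x, Continuous fun t ↦ v t x) (hK : ∀ t, LipschitzWith K (v t))
    (hB : Continuous B) (hvB : ∀ t x, ‖v t x‖ ≤ B t) (t₀ : ℝ) (x₀ : E) {r : ℝ} (hr : 0 ≤ r) :
    ∃ γ : ℝ → E, γ t₀ = x₀ ∧ ∀ t ∈ Ioo (t₀ - r) (t₀ + r), HasDerivAt γ (v t (γ t)) t := by
  obtain ⟨L, hL⟩ := (isCompact_Icc (a := t₀ - r) (b := t₀ + r)).bddAbove_image hB.continuousOn
  have hvL : ∀ t ∈ Icc (t₀ - r) (t₀ + r), ∀ x, ‖v t x‖ ≤ L.toNNReal := fun t ht x ↦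
    ((hvB t x).trans (hL (mem_image_of_mem B ht))).trans (Real.le_coe_toNNReal L)
  have ht₀ : t₀ ∈ Icc (t₀ - r) (t₀ + r) := ⟨by linarith, by linarith⟩
  have hPL : IsPicardLindelof v (⟨t₀, ht₀⟩ : Icc (t₀ - r) (t₀ + r)) x₀
      (L.toNNReal * r.toNNReal) 0 L.toNNReal K :=
    { lipschitzOnWith := fun t _ ↦ (hK t).lipschitzOnWith
      continuousOn := fun x _ ↦ (hv x).continuousOn
      norm_le := fun t ht x _ ↦ hvL t ht x
      mul_max_le := by simp [hr] }
  obtain ⟨γ, hγ₀, hγ⟩ := hPL.exists_eq_forall_mem_Icc_hasDerivWithinAt₀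
  exact ⟨γ, hγ₀, fun t ht ↦
    (hγ t (Ioo_subset_Icc_self ht)).hasDerivAt (Icc_mem_nhds ht.1 ht.2)⟩

theorem exists_isIntegralCurve_of_lipschitzWith [CompleteSpace E] {v : ℝ → E → E} {K : ℝ≥0}
    {B : ℝ → ℝ}
    (hv : ∀ x, Continuous fun t ↦ v t x) (hK : ∀ t, LipschitzWith K (v t))
    (hB : Continuous B) (hvB : ∀ t x, ‖v t x‖ ≤ B t) (t₀ : ℝ) (x₀ : E) :
    ∃ γ : ℝ → E, γ t₀ = x₀ ∧ IsIntegralCurve γ v := by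
  choose γ hγ₀ hγ using fun n : ℕ ↦
    exists_hasDerivAt_Ioo_of_lipschitzWith hv hK hB hvB t₀ x₀ (Nat.cast_nonneg (α := ℝ) n)
  have hball : ∀ {t r : ℝ}, t ∈ Ioo (t₀ - r) (t₀ + r) ↔ |t - t₀| < r := by
    intro t r
    rw [← Real.ball_eq_Ioo, Metric.mem_ball, Real.dist_eq]
  have hcompat : ∀ {m n : ℕ}, 0 < m → m ≤ n → EqOn (γ m) (γ n) (Ioo (t₀ - m) (t₀ + m)) := by
    intro m n hm hmn
    have hsub : Ioo (t₀ - m) (t₀ + m) ⊆ Ioo (t₀ - n) (t₀ + n) := by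
      gcongr
    exact ODE_solution_unique_of_mem_Ioo (s := fun _ ↦ univ) (t₀ := t₀)
      (fun t _ ↦ (hK t).lipschitzOnWith) (hball.2 (by simpa using hm))
      (fun t ht ↦ ⟨hγ m t ht, trivial⟩) (fun t ht ↦ ⟨hγ n t (hsub ht), trivial⟩)
      ((hγ₀ m).trans (hγ₀ n).symm)
  refine ⟨fun t ↦ γ (⌊|t - t₀|⌋₊ + 1) t, hγ₀ _, fun t ↦ ?_⟩
  set n := ⌊|t - t₀|⌋₊ + 1
  have ht : t ∈ Ioo (t₀ - n) (t₀ + n) := hball.2 (by exact_mod_cast Nat.lt_floor_add_one _)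
  have heq : (fun s ↦ γ (⌊|s - t₀|⌋₊ + 1) s) =ᶠ[𝓝 t] γ n := by
    filter_upwards [Ioo_mem_nhds ht.1 ht.2] with s hs
    refine hcompat (Nat.succ_pos _) ?_ (hball.2 (by exact_mod_cast Nat.lt_floor_add_one _))
    exact Nat.succ_le_of_lt ((Nat.floor_lt (abs_nonneg _)).2 (hball.1 hs))
  exact (hγ n t ht).congr_of_eventuallyEq heq

/-- The solutions of `x' = v(t, x)` are global, unique, and depend continuously on the initial
value; `φ t x` is the solution that passes through `x` at time `t`. -/
structure IsGlobalFlow (v : ℝ → E → E) (φ : ℝ → E → ℝ → E) : Prop where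
  initial : ∀ t x, φ t x t = x
  isIntegralCurve : ∀ t x, IsIntegralCurve (φ t x) v
  unique : ∀ {γ}, IsIntegralCurve γ v → ∀ t, φ t (γ t) = γ
  continuous : ∀ t s, Continuous fun x ↦ φ t x s

/-- The field of the equation `x' = -q(t) x + F(t, x)`. -/
def dampedField (q : ℝ → ℝ) (F : ℝ → E → E) (t : ℝ) (x : E) : E := -q t • x + F t x

variable {a q : ℝ → ℝ} {F : ℝ → E → E} {K : ℝ≥0} {γ γ₁ γ₂ : ℝ → E}

lemma isIntegralCurve_dampedField_iff (ha : ∀ t, HasDerivAt a (q t) t) :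
    IsIntegralCurve γ (dampedField q F) ↔
      ∀ t, HasDerivAt (fun t ↦ Real.exp (a t) • γ t) (Real.exp (a t) • F t (γ t)) t := by
  refine forall_congr' fun t ↦ ⟨fun h ↦ ?_, fun h ↦ ?_⟩
  · refine ((ha t).exp.smul h).congr_deriv ?_
    simp only [dampedField]
    module
  · have hinv : ∀ t, Real.exp (-a t) * Real.exp (a t) = 1 := fun t ↦ by
      rw [← Real.exp_add, neg_add_cancel, Real.exp_zero]
    have hγ : γ = fun t ↦ Real.exp (-a t) • Real.exp (a t) • γ t := by
      simp only [smul_smul, hinv, one_smul]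
    rw [hγ]
    refine ((ha t).neg.exp.smul h).congr_deriv ?_
    simp only [dampedField, Pi.neg_apply, smul_smul, hinv, one_smul,
      mul_right_comm _ (-q t), one_mul, add_comm]

lemma norm_sub_le_of_isIntegralCurve_dampedField (ha : ∀ t, HasDerivAt a (q t) t)
    (hF : ∀ t, LipschitzWith K (F t)) (h₁ : IsIntegralCurve γ₁ (dampedField q F))
    (h₂ : IsIntegralCurve γ₂ (dampedField q F)) (s t : ℝ) :
    ‖γ₁ s - γ₂ s‖ ≤ Real.exp (a t - a s + K * |s - t|) * ‖γ₁ t - γ₂ t‖ := by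
  rw [isIntegralCurve_dampedField_iff ha] at h₁ h₂
  have h := norm_le_mul_exp_of_norm_deriv_le (K := K) (fun t ↦ (h₁ t).sub (h₂ t)) (fun t ↦ ?_) s t
  · simp only [Pi.sub_apply, ← smul_sub, norm_smul, Real.norm_eq_abs, Real.abs_exp] at h
    rw [Real.exp_add, Real.exp_sub, div_mul_eq_mul_div, div_mul_eq_mul_div,
      le_div_iff₀' (Real.exp_pos _)]
    exact h.trans_eq (mul_right_comm _ _ _)
  · simp only [Pi.sub_apply, ← smul_sub, norm_smul, Real.norm_eq_abs, Real.abs_exp]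
    rw [mul_left_comm]
    gcongr
    exact (hF t).norm_sub_le _ _

lemma eq_of_isIntegralCurve_dampedField (ha : ∀ t, HasDerivAt a (q t) t)
    (hF : ∀ t, LipschitzWith K (F t)) (h₁ : IsIntegralCurve γ₁ (dampedField q F))
    (h₂ : IsIntegralCurve γ₂ (dampedField q F)) {t : ℝ} (ht : γ₁ t = γ₂ t) : γ₁ = γ₂ := by
  funext s
  have h := norm_sub_le_of_isIntegralCurve_dampedField ha hF h₁ h₂ s t
  rw [ht, sub_self, norm_zero, mul_zero] at h
  exact sub_eq_zero.1 (norm_le_zero_iff.1 h)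

lemma exists_isIntegralCurve_dampedField [CompleteSpace E] {M : ℝ}
    (ha : ∀ t, HasDerivAt a (q t) t) (hF : ∀ t, LipschitzWith K (F t))
    (hFc : Continuous fun p : ℝ × E ↦ F p.1 p.2) (hM : ∀ t x, ‖F t x‖ ≤ M) (t₀ : ℝ) (x₀ : E) :
    ∃ γ, γ t₀ = x₀ ∧ IsIntegralCurve γ (dampedField q F) := by
  have hac : Continuous a := continuous_iff_continuousAt.2 fun t ↦ (ha t).continuousAt
  let w : ℝ → E → E := fun t z ↦ Real.exp (a t) • F t (Real.exp (-a t) • z)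
  have hw : ∀ z, Continuous fun t ↦ w t z := fun z ↦
    hac.rexp.smul (hFc.comp (continuous_id.prodMk (hac.neg.rexp.smul continuous_const)))
  have hwK : ∀ t, LipschitzWith K (w t) := fun t ↦ .of_dist_le_mul fun z z' ↦ calc
    dist (w t z) (w t z')
      = Real.exp (a t) * dist (F t (Real.exp (-a t) • z)) (F t (Real.exp (-a t) • z')) := by
      rw [dist_smul₀, Real.norm_eq_abs, Real.abs_exp]
    _ ≤ Real.exp (a t) * (K * dist (Real.exp (-a t) • z) (Real.exp (-a t) • z')) := by
      gcongr
      exact (hF t).dist_le_mul _ _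
    _ = K * dist z z' := by
      rw [dist_smul₀, Real.norm_eq_abs, Real.abs_exp, mul_left_comm, ← mul_assoc (Real.exp _),
        ← Real.exp_add, add_neg_cancel, Real.exp_zero, one_mul]
  have hwM : ∀ t z, ‖w t z‖ ≤ Real.exp (a t) * M := fun t z ↦ by
    rw [norm_smul, Real.norm_eq_abs, Real.abs_exp]
    gcongr
    exact hM t _
  obtain ⟨ζ, hζ₀, hζ⟩ := exists_isIntegralCurve_of_lipschitzWith hw hwK
    (hac.rexp.mul continuous_const) hwM t₀ (Real.exp (a t₀) • x₀)
  refine ⟨fun t ↦ Real.exp (-a t) • ζ t, ?_, (isIntegralCurve_dampedField_iff ha).2 fun t ↦ ?_⟩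
  · simp only [hζ₀, smul_smul, ← Real.exp_add, neg_add_cancel, Real.exp_zero, one_smul]
  · simpa only [smul_smul, ← Real.exp_add, add_neg_cancel, Real.exp_zero, one_smul] using hζ t

theorem exists_isGlobalFlow_dampedField [CompleteSpace E] {M : ℝ}
    (ha : ∀ t, HasDerivAt a (q t) t) (hF : ∀ t, LipschitzWith K (F t))
    (hFc : Continuous fun p : ℝ × E ↦ F p.1 p.2) (hM : ∀ t x, ‖F t x‖ ≤ M) :
    ∃ φ, IsGlobalFlow (dampedField q F) φ := by
  choose φ hφ₀ hφ using exists_isIntegralCurve_dampedField ha hF hFc hM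
  refine ⟨φ, hφ₀, hφ, fun hγ t ↦
    eq_of_isIntegralCurve_dampedField ha hF (hφ t _) hγ (hφ₀ t _), fun t s ↦ ?_⟩
  refine (LipschitzWith.of_dist_le_mul (K := (Real.exp (a t - a s + K * |s - t|)).toNNReal)
    fun x y ↦ ?_).continuous
  have h := norm_sub_le_of_isIntegralCurve_dampedField ha hF (hφ t x) (hφ t y) s t
  rwa [hφ₀, hφ₀, ← dist_eq_norm, ← dist_eq_norm,
    ← Real.coe_toNNReal _ (Real.exp_pos _).le] at h

lemma lt_of_lt_of_isIntegralCurve_dampedField {F : ℝ → ℝ → ℝ} {x₁ x₂ : ℝ → ℝ}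
    (ha : ∀ t, HasDerivAt a (q t) t) (hF : ∀ t, LipschitzWith K (F t))
    (h₁ : IsIntegralCurve x₁ (dampedField q F)) (h₂ : IsIntegralCurve x₂ (dampedField q F))
    {t : ℝ} (hlt : x₁ t < x₂ t) (s : ℝ) : x₁ s < x₂ s := by
  by_contra! hle
  obtain ⟨r, -, hr⟩ := intermediate_value_uIcc
    (h₁.continuous.sub h₂.continuous).continuousOn
    (show (0 : ℝ) ∈ uIcc ((x₁ - x₂) t) ((x₁ - x₂) s) from
      Icc_subset_uIcc ⟨(sub_neg.2 hlt).le, sub_nonneg.2 hle⟩)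
  rw [eq_of_isIntegralCurve_dampedField ha hF h₁ h₂ (sub_eq_zero.1 hr)] at hlt
  exact lt_irrefl _ hlt

end ODE

section BoundedResponse

lemma hasDerivAt_integral_Ioi {f : ℝ → ℝ} (hf : Continuous f)
    (hint : ∀ t, IntegrableOn f (Ioi t)) (t : ℝ) :
    HasDerivAt (fun t ↦ ∫ s in Ioi t, f s) (-f t) t := by
  have hsub : (fun r ↦ ∫ s in Ioi r, f s) = fun r ↦ (∫ s in Ioi t, f s) - ∫ s in t..r, f s := by
    funext r
    rw [← intervalIntegral.integral_Ioi_sub_Ioi' (hint t) (hint r), sub_sub_cancel]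
  rw [hsub]
  exact (hf.integral_hasStrictDerivAt t t).hasDerivAt.const_sub _

lemma tendsto_atTop_of_le_deriv {a q : ℝ → ℝ} {η : ℝ} (hη : 0 < η)
    (ha : ∀ t, HasDerivAt a (q t) t) (hq : ∀ t, η ≤ q t) : Tendsto a atTop atTop := by
  refine tendsto_atTop_mono' _ ?_
    (tendsto_atTop_add_const_right _ (a 0) (tendsto_id.const_mul_atTop hη))
  filter_upwards [eventually_ge_atTop 0] with t ht
  have h := mul_sub_le_image_sub_of_le_deriv (fun t ↦ (ha t).differentiableAt)
    (fun t ↦ (hq t).trans_eq (ha t).deriv.symm) ht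
  rw [sub_zero] at h
  exact le_sub_iff_add_le.1 h

/-- For an increasing `a`, the bounded solution of `u' = a'(t) u + b(t)`. -/
noncomputable def unstableResponse (a b : ℝ → ℝ) (t : ℝ) : ℝ :=
  -(Real.exp (a t) * ∫ s in Ioi t, Real.exp (-a s) * b s)

/-- For an increasing `a`, the bounded solution of `u' = -a'(t) u + b(t)`. -/
noncomputable def stableResponse (a b : ℝ → ℝ) (t : ℝ) : ℝ :=
  Real.exp (-a t) * ∫ s in Iic t, Real.exp (a s) * b s

lemma stableResponse_eq_unstableResponse (a b : ℝ → ℝ) (t : ℝ) :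
    stableResponse a b t = unstableResponse (fun s ↦ -a (-s)) (fun s ↦ -b (-s)) (-t) := by
  simp only [stableResponse, unstableResponse, neg_neg, mul_neg, integral_neg]
  rw [integral_comp_neg_Ioi (-t) fun s ↦ Real.exp (a s) * b s, neg_neg]

section

variable {a q : ℝ → ℝ} {κ : ℝ} (ha : ∀ t, HasDerivAt a (q t) t)
include ha

lemma hasDerivAt_neg_comp_neg (t : ℝ) : HasDerivAt (fun s ↦ -a (-s)) (q (-t)) t :=
  (((ha (-t)).scomp t (hasDerivAt_neg t)).neg).congr_deriv (by simp)

lemma hasDerivAt_neg_mul_exp_neg (t : ℝ) :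
    HasDerivAt (fun s ↦ -(κ * Real.exp (-a s))) (Real.exp (-a t) * (κ * q t)) t :=
  (((ha t).neg.exp.const_mul κ).neg).congr_deriv (by simp only [Pi.neg_apply]; ring)

variable (hκq : ∀ t, 0 ≤ κ * q t) (haTop : Tendsto a atTop atTop)
include hκq haTop

lemma integrableOn_exp_neg_mul_deriv_Ioi (t : ℝ) :
    IntegrableOn (fun s ↦ Real.exp (-a s) * (κ * q s)) (Ioi t) :=
  integrableOn_Ioi_deriv_of_nonneg' (fun s _ ↦ hasDerivAt_neg_mul_exp_neg ha s)
    (fun s _ ↦ mul_nonneg (Real.exp_nonneg _) (hκq s))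
    (((Real.tendsto_exp_neg_atTop_nhds_zero.comp haTop).const_mul κ).neg)

lemma integral_exp_neg_mul_deriv_Ioi (t : ℝ) :
    ∫ s in Ioi t, Real.exp (-a s) * (κ * q s) = κ * Real.exp (-a t) := by
  rw [integral_Ioi_of_hasDerivAt_of_nonneg' (fun s _ ↦ hasDerivAt_neg_mul_exp_neg ha s)
    (fun s _ ↦ mul_nonneg (Real.exp_nonneg _) (hκq s))
    (((Real.tendsto_exp_neg_atTop_nhds_zero.comp haTop).const_mul κ).neg)]
  ring

end

section

variable {a b q : ℝ → ℝ} {κ : ℝ} (ha : ∀ t, HasDerivAt a (q t) t)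
  (hb : ∀ t, |b t| ≤ κ * q t)
include ha hb

omit ha in
lemma norm_exp_neg_mul_le (t : ℝ) :
    ‖Real.exp (-a t) * b t‖ ≤ Real.exp (-a t) * (κ * q t) := by
  rw [norm_mul, Real.norm_eq_abs, Real.abs_exp, Real.norm_eq_abs]
  gcongr
  exact hb t

lemma abs_unstableResponse_le (haTop : Tendsto a atTop atTop) (t : ℝ) :
    |unstableResponse a b t| ≤ κ := by
  have hκq : ∀ t, 0 ≤ κ * q t := fun t ↦ (abs_nonneg _).trans (hb t)
  calc |unstableResponse a b t|
      = Real.exp (a t) * ‖∫ s in Ioi t, Real.exp (-a s) * b s‖ := by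
        rw [unstableResponse, abs_neg, abs_mul, Real.abs_exp, Real.norm_eq_abs]
    _ ≤ Real.exp (a t) * ∫ s in Ioi t, Real.exp (-a s) * (κ * q s) := by
        gcongr
        exact norm_integral_le_of_norm_le (integrableOn_exp_neg_mul_deriv_Ioi ha hκq haTop t)
          (.of_forall (norm_exp_neg_mul_le hb))
    _ = κ := by
        rw [integral_exp_neg_mul_deriv_Ioi ha hκq haTop, mul_left_comm, ← Real.exp_add,
          add_neg_cancel, Real.exp_zero, mul_one]

lemma abs_stableResponse_le (haBot : Tendsto a atBot atBot) (t : ℝ) :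
    |stableResponse a b t| ≤ κ := by
  rw [stableResponse_eq_unstableResponse]
  exact abs_unstableResponse_le (hasDerivAt_neg_comp_neg ha)
    (fun s ↦ (abs_neg _).trans_le (hb (-s)))
    (tendsto_neg_atBot_atTop.comp (haBot.comp tendsto_neg_atTop_atBot)) _

lemma hasDerivAt_unstableResponse (hbc : Continuous b) (haTop : Tendsto a atTop atTop) (t : ℝ) :
    HasDerivAt (unstableResponse a b) (q t * unstableResponse a b t + b t) t := by
  have hac : Continuous a := continuous_iff_continuousAt.2 fun t ↦ (ha t).continuousAt
  have hint : ∀ t, IntegrableOn (fun s ↦ Real.exp (-a s) * b s) (Ioi t) := fun t ↦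
    (integrableOn_exp_neg_mul_deriv_Ioi ha (fun t ↦ (abs_nonneg _).trans (hb t)) haTop t).mono'
      (hac.neg.rexp.mul hbc).aestronglyMeasurable (.of_forall (norm_exp_neg_mul_le hb))
  have hinv : Real.exp (a t) * Real.exp (-a t) = 1 := by
    rw [← Real.exp_add, add_neg_cancel, Real.exp_zero]
  refine ((ha t).exp.mul (hasDerivAt_integral_Ioi (hac.neg.rexp.mul hbc) hint t)).neg.congr_deriv ?_
  simp only [unstableResponse, Pi.neg_apply, Pi.mul_apply]
  linear_combination b t * hinv

lemma hasDerivAt_stableResponse (hbc : Continuous b) (haBot : Tendsto a atBot atBot) (t : ℝ) :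
    HasDerivAt (stableResponse a b) (-q t * stableResponse a b t + b t) t := by
  have h := hasDerivAt_unstableResponse (hasDerivAt_neg_comp_neg ha)
    (fun s ↦ (abs_neg _).trans_le (hb (-s))) (hbc.comp continuous_neg).neg
    (tendsto_neg_atBot_atTop.comp (haBot.comp tendsto_neg_atTop_atBot)) (-t)
  rw [funext (stableResponse_eq_unstableResponse a b)]
  refine (h.scomp t (hasDerivAt_neg t)).congr_deriv ?_
  simp only [neg_neg, smul_eq_mul]
  ring

end

section

variable {X : Type*} [TopologicalSpace X] [FirstCountableTopology X] {a q : ℝ → ℝ}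
  {b : X → ℝ → ℝ} {κ : ℝ} (ha : ∀ t, HasDerivAt a (q t) t) (hb : ∀ x t, |b x t| ≤ κ * q t)
  (hbt : ∀ x, Continuous (b x)) (hbx : ∀ t, Continuous fun x ↦ b x t)
include ha hb hbt hbx

lemma continuous_unstableResponse (haTop : Tendsto a atTop atTop) (t : ℝ) :
    Continuous fun x ↦ unstableResponse a (b x) t := by
  refine continuous_iff_continuousAt.2 fun x₀ ↦ Continuous.continuousAt ?_
  have hac : Continuous a := continuous_iff_continuousAt.2 fun t ↦ (ha t).continuousAt
  exact (continuous_const.mul (continuous_of_dominated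
    (fun x ↦ (hac.neg.rexp.mul (hbt x)).aestronglyMeasurable)
    (fun x ↦ .of_forall (norm_exp_neg_mul_le (hb x)))
    (integrableOn_exp_neg_mul_deriv_Ioi ha (fun t ↦ (abs_nonneg _).trans (hb x₀ t)) haTop t)
    (.of_forall fun s ↦ continuous_const.mul (hbx s)))).neg

lemma continuous_stableResponse (haBot : Tendsto a atBot atBot) (t : ℝ) :
    Continuous fun x ↦ stableResponse a (b x) t := by
  simp only [stableResponse_eq_unstableResponse]
  exact continuous_unstableResponse (hasDerivAt_neg_comp_neg ha)
    (fun x s ↦ (abs_neg _).trans_le (hb x (-s))) (fun x ↦ ((hbt x).comp continuous_neg).neg)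
    (fun s ↦ (hbx (-s)).neg)
    (tendsto_neg_atBot_atTop.comp (haBot.comp tendsto_neg_atTop_atBot)) _

end

end BoundedResponse

section BackwardUniqueness

lemma le_of_mul_sub_le_deriv_Iic {D D' : ℝ → ℝ} {A B k T : ℝ} (hk : 0 < k)
    (hD : ∀ t ≤ T, HasDerivAt D (D' t) t) (hB : ∀ t ≤ T, B ≤ D t)
    (hD' : ∀ t ≤ T, k * (A - D t) ≤ D' t) {t : ℝ} (ht : t ≤ T) : A ≤ D t := by
  let f : ℝ → ℝ := fun t ↦ (D t - A) * Real.exp (k * t)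
  have hf : ∀ t ≤ T, HasDerivAt f ((D' t - k * (A - D t)) * Real.exp (k * t)) t := fun t ht ↦
    (((hD t ht).sub_const A).mul ((hasDerivAt_id t).const_mul k).exp).congr_deriv (by
      simp only [id_eq]; ring)
  have hmono : MonotoneOn f (Iic T) := by
    refine monotoneOn_of_hasDerivWithinAt_nonneg (convex_Iic T)
      (fun t ht ↦ (hf t ht).continuousAt.continuousWithinAt)
      (fun t ht ↦ (hf t (mem_Iic.1 (interior_subset ht))).hasDerivWithinAt) fun t ht ↦ ?_
    exact mul_nonneg (sub_nonneg.2 (hD' t (mem_Iic.1 (interior_subset ht)))) (Real.exp_nonneg _)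
  have hlim : Tendsto (fun s ↦ (B - A) * Real.exp (k * s)) atBot (𝓝 0) := by
    rw [← mul_zero (B - A)]
    exact (Real.tendsto_exp_atBot.comp (tendsto_id.const_mul_atBot hk)).const_mul (B - A)
  have hft : 0 ≤ f t := by
    refine le_of_tendsto hlim ?_
    filter_upwards [eventually_le_atBot t] with s hs
    exact (mul_le_mul_of_nonneg_right (sub_le_sub_right (hB s (hs.trans ht)) A)
      (Real.exp_nonneg _)).trans (hmono (hs.trans ht) ht hs)
  exact sub_nonneg.1 (nonneg_of_mul_nonneg_left hft (Real.exp_pos _))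

/-- The forcing term `g(x + t)`, a profile `g` travelling with unit speed. -/
def travellingForce (g : ℝ → ℝ) (t x : ℝ) : ℝ := g (x + t)

section Sliding

variable {q g x x₁ x₂ : ℝ → ℝ} {K : ℝ≥0} {M κ m N δ T : ℝ}

lemma slide_gap (hg : LipschitzWith K g)
    (h₁ : IsIntegralCurve x₁ (dampedField q (travellingForce g)))
    (h₂ : IsIntegralCurve x₂ (dampedField q (travellingForce g)))
    (hm : 0 < m) (hqm : ∀ t ≤ T, m ≤ q t) (hqN : ∀ t ≤ T, q t ≤ N)
    (hqδ : ∀ s t, s ≤ t → t ≤ T → |q t - q s| ≤ δ * (t - s)) (hδ : δ * κ ≤ m / 2)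
    (hx₂ : ∀ t ≤ T, |x₂ t| ≤ κ) {σ : ℝ} (hσ : 0 ≤ σ)
    (hle : ∀ t ≤ T, x₂ (t - σ) - σ ≤ x₁ t) {t : ℝ} (ht : t ≤ T) :
    m * σ / (2 * (N + K)) ≤ x₁ t - (x₂ (t - σ) - σ) := by
  have hNK : 0 < N + K := add_pos_of_pos_of_nonneg
    (hm.trans_le ((hqm T le_rfl).trans (hqN T le_rfl))) K.coe_nonneg
  refine le_of_mul_sub_le_deriv_Iic (D := fun t ↦ x₁ t - (x₂ (t - σ) - σ)) (B := 0) hNK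
    (fun t _ ↦ (h₁ t).sub (((h₂ (t - σ)).comp_sub_const t σ).sub_const σ))
    (fun t ht ↦ sub_nonneg.2 (hle t ht)) (fun t ht ↦ ?_) ht
  have htσ : t - σ ≤ t := sub_le_self t hσ
  have hgap : 0 ≤ x₁ t - (x₂ (t - σ) - σ) := sub_nonneg.2 (hle t ht)
  have hforce : g (x₂ (t - σ) + (t - σ)) - g (x₁ t + t) ≤ K * (x₁ t - (x₂ (t - σ) - σ)) := by
    have h := hg.norm_sub_le (x₂ (t - σ) + (t - σ)) (x₁ t + t)
    rw [Real.norm_eq_abs, Real.norm_eq_abs, ← abs_neg (_ - (_ + t))] at h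
    refine (le_abs_self _).trans (h.trans_eq ?_)
    rw [abs_of_nonneg (by linarith)]
    ring
  have hdrift : (q t - q (t - σ)) * x₂ (t - σ) ≤ m / 2 * σ := calc
    (q t - q (t - σ)) * x₂ (t - σ) ≤ |q t - q (t - σ)| * |x₂ (t - σ)| := by
      rw [← abs_mul]
      exact le_abs_self _
    _ ≤ δ * (t - (t - σ)) * κ := by
      have hq := hqδ _ _ htσ ht
      exact mul_le_mul hq (hx₂ _ (htσ.trans ht)) (abs_nonneg _) ((abs_nonneg _).trans hq)
    _ = δ * κ * σ := by ring
    _ ≤ m / 2 * σ := by gcongr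
  have hdamp : q t * (x₁ t - (x₂ (t - σ) - σ)) ≤ N * (x₁ t - (x₂ (t - σ) - σ)) := by
    gcongr
    exact hqN t ht
  have hpush : m * σ ≤ q t * σ := by
    gcongr
    exact hqm t ht
  have hA : (N + K) * (m * σ / (2 * (N + K))) = m / 2 * σ := by field_simp
  simp only [dampedField, travellingForce, smul_eq_mul]
  linarith

lemma abs_sub_le_of_isIntegralCurve_Iic
    (hx : IsIntegralCurve x (dampedField q (travellingForce g))) (hM : ∀ u, |g u| ≤ M)
    (hq : ∀ t ≤ T, |q t| ≤ N) (hκ : ∀ t ≤ T, |x t| ≤ κ) {s t : ℝ} (hs : s ≤ T) (ht : t ≤ T) :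
    |x t - x s| ≤ (N * κ + M) * |t - s| := by
  refine Convex.norm_image_sub_le_of_norm_hasDerivWithin_le
    (fun r _ ↦ (hx r).hasDerivWithinAt) (fun r hr ↦ ?_) (convex_Iic T) hs ht
  refine norm_add_le_of_le ?_ (hM _)
  rw [smul_eq_mul, norm_mul, norm_neg]
  exact mul_le_mul (hq r hr) (hκ r hr) (abs_nonneg _) ((abs_nonneg _).trans (hq r hr))

lemma exists_slide_step (hg : LipschitzWith K g) (hM : ∀ u, |g u| ≤ M)
    (h₁ : IsIntegralCurve x₁ (dampedField q (travellingForce g)))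
    (h₂ : IsIntegralCurve x₂ (dampedField q (travellingForce g)))
    (hm : 0 < m) (hqm : ∀ t ≤ T, m ≤ q t) (hqN : ∀ t ≤ T, q t ≤ N)
    (hqδ : ∀ s t, s ≤ t → t ≤ T → |q t - q s| ≤ δ * (t - s)) (hδ : δ * κ ≤ m / 2)
    (hx₂ : ∀ t ≤ T, |x₂ t| ≤ κ) :
    ∃ k, 0 < k ∧ k ≤ 1 ∧ ∀ σ, 0 ≤ σ → (∀ t ≤ T, x₂ (t - σ) - σ ≤ x₁ t) →
      ∀ t ≤ T, x₂ (t - (1 - k) * σ) - (1 - k) * σ ≤ x₁ t := by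
  have hmN : m ≤ N := (hqm T le_rfl).trans (hqN T le_rfl)
  have hNK : m ≤ N + K := le_add_of_le_of_nonneg hmN K.coe_nonneg
  have hP : 0 ≤ N * κ + M := add_nonneg
    (mul_nonneg (hm.le.trans hmN) ((abs_nonneg _).trans (hx₂ T le_rfl)))
    ((abs_nonneg _).trans (hM 0))
  have hNK_pos : 0 < N + K := hm.trans_le hNK
  have hk : 0 < m / (2 * (N + K) * (N * κ + M + 1)) := by positivity
  have hk1 : m / (2 * (N + K) * (N * κ + M + 1)) ≤ 1 := by
    rw [div_le_one (by positivity)]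
    nlinarith [mul_nonneg hNK_pos.le hP]
  refine ⟨_, hk, hk1, fun σ hσ hle t ht ↦ ?_⟩
  set k := m / (2 * (N + K) * (N * κ + M + 1)) with hkdef
  have hkσ : (N * κ + M + 1) * (k * σ) = m * σ / (2 * (N + K)) := by
    rw [hkdef]
    field_simp
  have hgap := slide_gap hg h₁ h₂ hm hqm hqN hqδ hδ hx₂ hσ hle ht
  have hstep : |x₂ (t - (1 - k) * σ) - x₂ (t - σ)| ≤ (N * κ + M) * (k * σ) := by
    rw [← abs_of_nonneg (mul_nonneg hk.le hσ),
      show k * σ = t - (1 - k) * σ - (t - σ) by ring]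
    refine abs_sub_le_of_isIntegralCurve_Iic h₂ hM (fun t ht ↦ ?_) hx₂
      ((sub_le_self t hσ).trans ht)
      ((sub_le_self t (mul_nonneg (sub_nonneg.2 hk1) hσ)).trans ht)
    rw [abs_of_nonneg (hm.le.trans (hqm t ht))]
    exact hqN t ht
  linarith [(abs_le.1 hstep).2]

theorem le_on_Iic_of_bounded_of_slowly_varying (hg : LipschitzWith K g) (hM : ∀ u, |g u| ≤ M)
    (h₁ : IsIntegralCurve x₁ (dampedField q (travellingForce g)))
    (h₂ : IsIntegralCurve x₂ (dampedField q (travellingForce g)))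
    (hm : 0 < m) (hqm : ∀ t ≤ T, m ≤ q t) (hqN : ∀ t ≤ T, q t ≤ N)
    (hqδ : ∀ s t, s ≤ t → t ≤ T → |q t - q s| ≤ δ * (t - s)) (hδ : δ * κ ≤ m / 2)
    (hx₁ : ∀ t ≤ T, |x₁ t| ≤ κ) (hx₂ : ∀ t ≤ T, |x₂ t| ≤ κ) :
    ∀ t ≤ T, x₂ t ≤ x₁ t := by
  have hκ : 0 ≤ κ := (abs_nonneg _).trans (hx₁ T le_rfl)
  let S : Set ℝ := Icc 0 (2 * κ) ∩ ⋂ t, ⋂ (_ : t ≤ T), {σ | x₂ (t - σ) - σ ≤ x₁ t}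
  have hS : ∀ {σ}, σ ∈ S ↔ σ ∈ Icc 0 (2 * κ) ∧ ∀ t ≤ T, x₂ (t - σ) - σ ≤ x₁ t := by
    simp only [S, mem_inter_iff, mem_iInter, mem_ofPred_eq, implies_true]
  have hS_compact : IsCompact S := isCompact_Icc.inter_right <|
    isClosed_iInter fun t ↦ isClosed_iInter fun _ ↦ isClosed_le
      ((h₂.continuous.comp (continuous_const.sub continuous_id)).sub continuous_id)
      continuous_const
  have hS_nonempty : S.Nonempty := ⟨2 * κ, hS.2 ⟨⟨by positivity, le_rfl⟩, fun t ht ↦ by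
    linarith [(abs_le.1 (hx₁ t ht)).1, (abs_le.1 (hx₂ (t - 2 * κ) (by linarith))).2]⟩⟩
  obtain ⟨σ, hσS, hmin⟩ := hS_compact.exists_isLeast hS_nonempty
  obtain ⟨⟨hσ, hσκ⟩, hslide⟩ := hS.1 hσS
  obtain ⟨k, hk, hk1, hstep⟩ := exists_slide_step hg hM h₁ h₂ hm hqm hqN hqδ hδ hx₂
  have hle : σ ≤ (1 - k) * σ :=
    hmin (hS.2 ⟨⟨mul_nonneg (sub_nonneg.2 hk1) hσ, by nlinarith⟩, hstep σ hσ hslide⟩)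
  have hσ0 : σ = 0 := le_antisymm (by nlinarith) hσ
  simpa only [hσ0, sub_zero] using hslide

end Sliding

section Averaging

variable {a q g G x x₁ x₂ : ℝ → ℝ} {K : ℝ≥0} {M c κ q₀ : ℝ}

lemma hasDerivAt_exp_mul_primitive (ha : ∀ t, HasDerivAt a (q t) t)
    (hG : ∀ u, HasDerivAt G (g u) u)
    (hx : IsIntegralCurve x (dampedField q (travellingForce g))) (t : ℝ) :
    HasDerivAt (fun t ↦ Real.exp (a t) * G (x t + t))
      (Real.exp (a t) * (q t * G (x t + t) +
        g (x t + t) * (1 + g (x t + t) - q t * (x t - c * Real.exp (-a t)))) -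
        c * q t * g (x t + t)) t := by
  have hGx : HasDerivAt (fun t ↦ G (x t + t))
      (g (x t + t) * (dampedField q (travellingForce g) t (x t) + 1)) t :=
    (hG (x t + t)).comp (h := fun t ↦ x t + t) t ((hx t).add (hasDerivAt_id t))
  refine ((ha t).exp.mul hGx).congr_deriv ?_
  have hinv : Real.exp (a t) * Real.exp (-a t) = 1 := by
    rw [← Real.exp_add, add_neg_cancel, Real.exp_zero]
  simp only [dampedField, travellingForce, smul_eq_mul]
  linear_combination -(c * q t * g (x t + t)) * hinv

lemma abs_averaging_remainder_le {q N L M κ d G₁ G₂ g₁ g₂ r₁ r₂ : ℝ} (hd : 0 ≤ d) (hq : |q| ≤ N)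
    (hG : |G₂ - G₁| ≤ M * d) (hg : |g₂ - g₁| ≤ L * d) (hg₁ : |g₁| ≤ M) (hg₂ : |g₂| ≤ M)
    (hr₂ : |r₂| ≤ κ) (hr : r₂ - r₁ = d) :
    |(q * G₂ + g₂ * (1 + g₂ - q * r₂)) - (q * G₁ + g₁ * (1 + g₁ - q * r₁))| ≤
      (N * M + L * (1 + M + N * κ) + M * (L + N)) * d := by
  have hN : 0 ≤ N := (abs_nonneg _).trans hq
  have hsplit : (q * G₂ + g₂ * (1 + g₂ - q * r₂)) - (q * G₁ + g₁ * (1 + g₁ - q * r₁)) =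
      q * (G₂ - G₁) + (g₂ - g₁) * (1 + g₂ - q * r₂) + g₁ * ((g₂ - g₁) - q * d) := by
    rw [← hr]
    ring
  have hfactor : |1 + g₂ - q * r₂| ≤ 1 + M + N * κ :=
    (abs_sub _ _).trans (add_le_add ((abs_add_le _ _).trans (by simpa using hg₂)) (by
      rw [abs_mul]; gcongr))
  have hdiff : |(g₂ - g₁) - q * d| ≤ L * d + N * d :=
    (abs_sub _ _).trans (add_le_add hg (by rw [abs_mul, abs_of_nonneg hd]; gcongr))
  calc _ ≤ |q| * |G₂ - G₁| + |g₂ - g₁| * |1 + g₂ - q * r₂| + |g₁| * |(g₂ - g₁) - q * d| := by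
        rw [hsplit, ← abs_mul, ← abs_mul, ← abs_mul]
        exact abs_add_three _ _ _
    _ ≤ N * (M * d) + L * d * (1 + M + N * κ) + M * (L * d + N * d) := by
        gcongr
        · exact (abs_nonneg _).trans hg
        · exact (abs_nonneg _).trans hg₁
    _ = _ := by ring

lemma exists_primitive_of_lipschitzWith (hg : LipschitzWith K g) (hM : ∀ u, |g u| ≤ M) :
    ∃ G : ℝ → ℝ, (∀ u, HasDerivAt G (g u) u) ∧ ∀ u v, |G u - G v| ≤ M * |u - v| := by
  have hG : ∀ u, HasDerivAt (fun u ↦ ∫ s in (0 : ℝ)..u, g s) (g u) u := fun u ↦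
    (hg.continuous.integral_hasStrictDerivAt 0 u).hasDerivAt
  exact ⟨_, hG, fun u v ↦ Convex.norm_image_sub_le_of_norm_hasDerivWithin_le
    (fun s _ ↦ (hG s).hasDerivWithinAt) (fun s _ ↦ hM s) convex_univ (mem_univ v) (mem_univ u)⟩

/-- The gap between `x₁` and `x₂`, corrected by a primitive `G` of the force profile `g` so that the
oscillating term `g(x₂ + t) - g(x₁ + t)` of its derivative cancels to leading order when both
solutions are close to `c exp(-a)` and `a' → q₀` at `-∞`. -/
noncomputable def averagedGap (a G : ℝ → ℝ) (c q₀ : ℝ) (x₁ x₂ : ℝ → ℝ) (t : ℝ) : ℝ :=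
  x₂ t - x₁ t + Real.exp (a t) / (c * q₀) * (G (x₂ t + t) - G (x₁ t + t))

lemma exists_hasDerivAt_averagedGap (hc : c ≠ 0) (hq₀ : 0 < q₀)
    (ha : ∀ t, HasDerivAt a (q t) t) (hg : LipschitzWith K g) (hM : ∀ u, |g u| ≤ M)
    (hG : ∀ u, HasDerivAt G (g u) u) (hGM : ∀ u v, |G u - G v| ≤ M * |u - v|)
    (h₁ : IsIntegralCurve x₁ (dampedField q (travellingForce g)))
    (h₂ : IsIntegralCurve x₂ (dampedField q (travellingForce g))) {t : ℝ} (hlt : x₁ t < x₂ t)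
    {N : ℝ} (hN : |q t| ≤ N) (hr₂ : |x₂ t - c * Real.exp (-a t)| ≤ κ) :
    ∃ E', HasDerivAt (averagedGap a G c q₀ x₁ x₂) E' t ∧
      E' ≤ -(q t - |1 - q t / q₀| * K - Real.exp (a t) / |c * q₀| *
        (N * M + K * (1 + M + N * κ) + M * (K + N))) * (x₂ t - x₁ t) := by
  have hgap := ((h₂ t).sub (h₁ t)).add (((hasDerivAt_exp_mul_primitive (c := c) ha hG h₂ t).sub
    (hasDerivAt_exp_mul_primitive (c := c) ha hG h₁ t)).div_const (c * q₀))
  refine ⟨_, hgap.congr_of_eventuallyEq (.of_forall fun t ↦ ?_), ?_⟩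
  · simp only [averagedGap, Pi.add_apply, Pi.sub_apply]
    ring
  have hd : |x₂ t + t - (x₁ t + t)| = x₂ t - x₁ t := by
    rw [add_sub_add_right_eq_sub, abs_of_pos (sub_pos.2 hlt)]
  have hgd : |g (x₂ t + t) - g (x₁ t + t)| ≤ K * (x₂ t - x₁ t) :=
    (hg.norm_sub_le _ _).trans_eq (congrArg _ hd)
  let ρ : ℝ → ℝ := fun y ↦
    q t * G (y + t) + g (y + t) * (1 + g (y + t) - q t * (y - c * Real.exp (-a t)))
  have hρ : |ρ (x₂ t) - ρ (x₁ t)| ≤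
      (N * M + K * (1 + M + N * κ) + M * (K + N)) * (x₂ t - x₁ t) :=
    abs_averaging_remainder_le (sub_pos.2 hlt).le hN
      ((hGM (x₂ t + t) (x₁ t + t)).trans_eq (congrArg _ hd)) hgd (hM _) (hM _) hr₂
      (sub_sub_sub_cancel_right (x₂ t) (x₁ t) (c * Real.exp (-a t)))
  calc _ = -q t * (x₂ t - x₁ t) + (1 - q t / q₀) * (g (x₂ t + t) - g (x₁ t + t)) +
        Real.exp (a t) / (c * q₀) * (ρ (x₂ t) - ρ (x₁ t)) := by
        simp only [dampedField, travellingForce, smul_eq_mul, ρ]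
        field_simp
        ring
    _ ≤ -q t * (x₂ t - x₁ t) + |1 - q t / q₀| * (K * (x₂ t - x₁ t)) +
        Real.exp (a t) / |c * q₀| * ((N * M + K * (1 + M + N * κ) + M * (K + N)) *
          (x₂ t - x₁ t)) := by
        gcongr ?_ + ?_ + ?_
        · rfl
        · refine (le_abs_self _).trans ?_
          rw [abs_mul]
          gcongr
        · refine (le_abs_self _).trans ?_
          rw [abs_mul, abs_div, Real.abs_exp]
          gcongr
    _ = _ := by ring

lemma eventually_averagedGap_decay (hc : c ≠ 0) (hq₀ : 0 < q₀)
    (ha : ∀ t, HasDerivAt a (q t) t) (haBot : Tendsto a atBot atBot)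
    (hq : Tendsto q atBot (𝓝 q₀)) (hg : LipschitzWith K g) (hM : ∀ u, |g u| ≤ M)
    (hG : ∀ u, HasDerivAt G (g u) u) (hGM : ∀ u v, |G u - G v| ≤ M * |u - v|)
    (h₁ : IsIntegralCurve x₁ (dampedField q (travellingForce g)))
    (h₂ : IsIntegralCurve x₂ (dampedField q (travellingForce g))) (hlt : ∀ t, x₁ t < x₂ t)
    (hr₂ : ∀ t, |x₂ t - c * Real.exp (-a t)| ≤ κ) :
    ∀ᶠ t in atBot,
      |averagedGap a G c q₀ x₁ x₂ t - (x₂ t - x₁ t)| ≤ (x₂ t - x₁ t) / 2 ∧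
      ∃ E', HasDerivAt (averagedGap a G c q₀ x₁ x₂) E' t ∧ E' ≤ -(q₀ / 2) * (x₂ t - x₁ t) := by
  have hexp : Tendsto (fun t ↦ Real.exp (a t) / |c * q₀|) atBot (𝓝 0) := by
    rw [← zero_div |c * q₀|]
    exact (Real.tendsto_exp_atBot.comp haBot).div_const _
  have hrate : Tendsto (fun t ↦ q t - |1 - q t / q₀| * K - Real.exp (a t) / |c * q₀| *
      (2 * q₀ * M + K * (1 + M + 2 * q₀ * κ) + M * (K + 2 * q₀))) atBot (𝓝 q₀) := by
    have h := (hq.sub ((((hq.div_const q₀).const_sub 1).abs).mul_const (K : ℝ))).sub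
      (hexp.mul_const (2 * q₀ * M + K * (1 + M + 2 * q₀ * κ) + M * (K + 2 * q₀)))
    rwa [div_self hq₀.ne', sub_self, abs_zero, zero_mul, zero_mul, sub_zero, sub_zero] at h
  have hsmall : ∀ᶠ t in atBot, Real.exp (a t) / |c * q₀| * M < 1 / 2 :=
    (hexp.mul_const M).eventually_lt_const (by norm_num)
  filter_upwards [hrate.eventually_const_lt (half_lt_self hq₀), hsmall,
    hq.eventually_const_lt hq₀, hq.eventually_lt_const (show q₀ < 2 * q₀ by linarith)]
    with t hrate_t hsmall_t hq_pos hq_lt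
  have hd : 0 < x₂ t - x₁ t := sub_pos.2 (hlt t)
  constructor
  · calc |averagedGap a G c q₀ x₁ x₂ t - (x₂ t - x₁ t)|
        = Real.exp (a t) / |c * q₀| * |G (x₂ t + t) - G (x₁ t + t)| := by
          rw [averagedGap, add_sub_cancel_left, abs_mul, abs_div, Real.abs_exp]
      _ ≤ Real.exp (a t) / |c * q₀| * (M * (x₂ t - x₁ t)) := by
          gcongr
          refine (hGM _ _).trans_eq ?_
          rw [add_sub_add_right_eq_sub, abs_of_pos hd]
      _ ≤ (x₂ t - x₁ t) / 2 := by nlinarith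
  · obtain ⟨E', hE, hE'⟩ := exists_hasDerivAt_averagedGap hc hq₀ ha hg hM hG hGM h₁ h₂ (hlt t)
      ((abs_of_pos hq_pos).trans_le hq_lt.le) (hr₂ t)
    exact ⟨E', hE, hE'.trans (by nlinarith)⟩

theorem not_lt_of_asymptotic_of_ne_zero (hc : c ≠ 0) (hq₀ : 0 < q₀)
    (ha : ∀ t, HasDerivAt a (q t) t) (haBot : Tendsto a atBot atBot)
    (hq : Tendsto q atBot (𝓝 q₀)) (hg : LipschitzWith K g) (hM : ∀ u, |g u| ≤ M)
    (h₁ : IsIntegralCurve x₁ (dampedField q (travellingForce g)))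
    (h₂ : IsIntegralCurve x₂ (dampedField q (travellingForce g)))
    (hr₁ : ∀ t, |x₁ t - c * Real.exp (-a t)| ≤ κ) (hr₂ : ∀ t, |x₂ t - c * Real.exp (-a t)| ≤ κ) :
    ¬ ∀ t, x₁ t < x₂ t := by
  intro hlt
  obtain ⟨G, hG, hGM⟩ := exists_primitive_of_lipschitzWith hg hM
  obtain ⟨T, hT⟩ := eventually_atBot.1
    (eventually_averagedGap_decay hc hq₀ ha haBot hq hg hM hG hGM h₁ h₂ hlt hr₂)
  let E := averagedGap a G c q₀ x₁ x₂
  have hE_close : ∀ t ≤ T, |E t - (x₂ t - x₁ t)| ≤ (x₂ t - x₁ t) / 2 := fun t ht ↦ (hT t ht).1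
  have hd : ∀ t, 0 < x₂ t - x₁ t ∧ x₂ t - x₁ t ≤ 2 * κ := fun t ↦
    ⟨sub_pos.2 (hlt t), by linarith [(abs_le.1 (hr₁ t)).1, (abs_le.1 (hr₂ t)).2]⟩
  have hE_deriv : ∀ t ≤ T, HasDerivAt E (deriv E t) t ∧ deriv E t ≤ -(q₀ / 3) * E t := by
    intro t ht
    obtain ⟨E', hE, hE'⟩ := (hT t ht).2
    rw [hE.deriv]
    exact ⟨hE, by nlinarith [(abs_le.1 (hE_close t ht)).2]⟩
  have hE_T_nonpos : 0 ≤ -E T := by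
    refine le_of_mul_sub_le_deriv_Iic (D := fun t ↦ -E t) (k := q₀ / 3) (B := -(3 * κ))
      (by positivity) (fun t ht ↦ (hE_deriv t ht).1.neg) (fun t ht ↦ ?_) (fun t ht ↦ ?_) le_rfl
    · linarith [(abs_le.1 (hE_close t ht)).2, (hd t).2]
    · linarith [(hE_deriv t ht).2]
  linarith [(abs_le.1 (hE_close T le_rfl)).1, (hd T).1]

end Averaging

lemma eventually_abs_sub_le_mul_of_deriv_tendsto_zero {f : ℝ → ℝ} (hf : Differentiable ℝ f)
    (hf' : Tendsto (deriv f) atBot (𝓝 0)) {δ : ℝ} (hδ : 0 < δ) :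
    ∀ᶠ T in atBot, ∀ s t, s ≤ t → t ≤ T → |f t - f s| ≤ δ * (t - s) := by
  obtain ⟨T, hT⟩ := eventually_atBot.1 (hf'.eventually (Metric.closedBall_mem_nhds 0 hδ))
  filter_upwards [eventually_le_atBot T] with T' hT' s t hst ht
  have h := (convex_Iic T').norm_image_sub_le_of_norm_deriv_le (fun r _ ↦ hf r)
    (fun r hr ↦ mem_closedBall_zero_iff.1 (hT r (le_trans hr hT'))) (hst.trans ht) ht
  rwa [Real.norm_eq_abs, Real.norm_eq_abs, abs_of_nonneg (sub_nonneg.2 hst)] at h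

theorem not_lt_of_asymptotic {a q g x₁ x₂ : ℝ → ℝ} {K : ℝ≥0} {M c κ q₀ : ℝ} (hq₀ : 0 < q₀)
    (ha : ∀ t, HasDerivAt a (q t) t) (haBot : Tendsto a atBot atBot) (hqd : Differentiable ℝ q)
    (hq : Tendsto q atBot (𝓝 q₀)) (hq' : Tendsto (deriv q) atBot (𝓝 0))
    (hg : LipschitzWith K g) (hM : ∀ u, |g u| ≤ M)
    (h₁ : IsIntegralCurve x₁ (dampedField q (travellingForce g)))
    (h₂ : IsIntegralCurve x₂ (dampedField q (travellingForce g)))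
    (hr₁ : ∀ t, |x₁ t - c * Real.exp (-a t)| ≤ κ) (hr₂ : ∀ t, |x₂ t - c * Real.exp (-a t)| ≤ κ) :
    ¬ ∀ t, x₁ t < x₂ t := by
  rcases ne_or_eq c 0 with hc | rfl
  · exact not_lt_of_asymptotic_of_ne_zero hc hq₀ ha haBot hq hg hM h₁ h₂ hr₁ hr₂
  have hκ : 0 ≤ κ := (abs_nonneg _).trans (hr₁ 0)
  have hδ : q₀ / 4 / (κ + 1) * κ ≤ q₀ / 2 / 2 := by
    rw [div_mul_eq_mul_div, div_le_iff₀ (by positivity)]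
    nlinarith
  obtain ⟨T, hT⟩ := eventually_atBot.1 ((hq.eventually_const_lt (half_lt_self hq₀)).and
    (hq.eventually_lt_const (show q₀ < 2 * q₀ by linarith)))
  obtain ⟨T', hTT', hslow⟩ := ((eventually_le_atBot T).and
    (eventually_abs_sub_le_mul_of_deriv_tendsto_zero hqd hq'
      (show 0 < q₀ / 4 / (κ + 1) by positivity))).exists
  simp only [zero_mul, sub_zero] at hr₁ hr₂
  intro hlt
  exact (hlt T').not_ge (le_on_Iic_of_bounded_of_slowly_varying hg hM h₁ h₂ (half_pos hq₀)
    (fun t ht ↦ (hT t (ht.trans hTT')).1.le) (fun t ht ↦ (hT t (ht.trans hTT')).2.le) hslow hδ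
    (fun t _ ↦ hr₁ t) (fun t _ ↦ hr₂ t) T' le_rfl)

end BackwardUniqueness

section Straightening

lemma eq_mul_exp_neg_of_hasDerivAt {a q y : ℝ → ℝ} (ha : ∀ t, HasDerivAt a (q t) t)
    (hy : ∀ t, HasDerivAt y (-q t * y t) t) (s t : ℝ) :
    y t = Real.exp (a s) * y s * Real.exp (-a t) := by
  have hconst : ∀ t, HasDerivAt (fun t ↦ Real.exp (a t) * y t) 0 t := fun t ↦
    ((ha t).exp.mul (hy t)).congr_deriv (by ring)
  rw [is_const_of_deriv_eq_zero (fun t ↦ (hconst t).differentiableAt)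
    (fun t ↦ (hconst t).deriv) s t, mul_right_comm, ← Real.exp_add, add_neg_cancel, Real.exp_zero,
    one_mul]

lemma exists_homeomorph_of_injective_of_abs_sub_le {h : ℝ → ℝ} {κ : ℝ} (hc : Continuous h)
    (hinj : Function.Injective h) (hκ : ∀ x, |h x - x| ≤ κ) : ∃ e : ℝ ≃ₜ ℝ, ⇑e = h := by
  have htop : Tendsto h atTop atTop := tendsto_atTop_mono
    (fun x ↦ show x + -κ ≤ h x by linarith [(abs_le.1 (hκ x)).1])
    (tendsto_atTop_add_const_right _ (-κ) tendsto_id)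
  have hbot : Tendsto h atBot atBot := tendsto_atBot_mono
    (fun x ↦ show h x ≤ x + κ by linarith [(abs_le.1 (hκ x)).2])
    (tendsto_atBot_add_const_right _ κ tendsto_id)
  have hmono : StrictMono h := by
    refine (hc.strictMono_of_inj hinj).resolve_right fun hanti ↦ ?_
    obtain ⟨x, hx, hx0⟩ := ((htop.eventually_gt_atTop (h 0)).and (eventually_ge_atTop 0)).exists
    exact hx.not_ge (hanti.antitone hx0)
  exact ⟨(hmono.orderIsoOfSurjective h (hc.surjective htop hbot)).toHomeomorph, rfl⟩

/-- The straightening map of `x' = -q(t) x + F(t, x)`, where `q = a'` and `φ` is the flow: it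
subtracts from each solution the bounded response to the force felt along it, which leaves a
solution of `x' = -q(t) x`. -/
noncomputable def straightening (a : ℝ → ℝ) (F : ℝ → ℝ → ℝ) (φ : ℝ → ℝ → ℝ → ℝ) (t x : ℝ) : ℝ :=
  x - stableResponse a (fun s ↦ F s (φ t x s)) t

section

variable {a q : ℝ → ℝ} {F : ℝ → ℝ → ℝ} {φ : ℝ → ℝ → ℝ → ℝ} {κ : ℝ}
  (ha : ∀ t, HasDerivAt a (q t) t) (haBot : Tendsto a atBot atBot)
  (hF : ∀ t x, |F t x| ≤ κ * q t)

include ha haBot hF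

lemma abs_straightening_sub_le (t x : ℝ) : |straightening a F φ t x - x| ≤ κ := by
  rw [straightening, sub_sub_cancel_left, abs_neg]
  exact abs_stableResponse_le ha (fun s ↦ hF s _) haBot t

variable (hFc : Continuous fun p : ℝ × ℝ ↦ F p.1 p.2) (hφ : IsGlobalFlow (dampedField q F) φ)
include hFc hφ

lemma continuous_straightening (t : ℝ) : Continuous (straightening a F φ t) :=
  continuous_id.sub <| continuous_stableResponse ha (fun x s ↦ hF s (φ t x s))
    (fun x ↦ hFc.comp (continuous_id.prodMk (hφ.isIntegralCurve t x).continuous))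
    (fun s ↦ hFc.comp (continuous_const.prodMk (hφ.continuous t s))) haBot t

lemma hasDerivAt_straightening {x : ℝ → ℝ} (hx : IsIntegralCurve x (dampedField q F)) (t : ℝ) :
    HasDerivAt (fun t ↦ straightening a F φ t (x t)) (-q t * straightening a F φ t (x t)) t := by
  simp only [straightening, hφ.unique hx]
  refine ((hx t).sub (hasDerivAt_stableResponse ha (fun s ↦ hF s (x s))
    (hFc.comp (continuous_id.prodMk hx.continuous)) haBot t)).congr_deriv ?_
  simp only [dampedField, smul_eq_mul]
  ring

end

lemma continuous_travellingForce {g : ℝ → ℝ} (hg : Continuous g) :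
    Continuous fun p : ℝ × ℝ ↦ travellingForce g p.1 p.2 :=
  hg.comp (continuous_snd.add continuous_fst)

lemma lipschitzWith_travellingForce {g : ℝ → ℝ} {K : ℝ≥0} (hg : LipschitzWith K g) (t : ℝ) :
    LipschitzWith K (travellingForce g t) :=
  .of_dist_le_mul fun x y ↦ (hg.dist_le_mul _ _).trans_eq <| by rw [dist_add_right]

theorem straightening_injective {a q g : ℝ → ℝ} {φ : ℝ → ℝ → ℝ → ℝ} {K : ℝ≥0} {κ q₀ : ℝ}
    (hq₀ : 0 < q₀) (ha : ∀ t, HasDerivAt a (q t) t) (haBot : Tendsto a atBot atBot)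
    (hqd : Differentiable ℝ q) (hq : Tendsto q atBot (𝓝 q₀))
    (hq' : Tendsto (deriv q) atBot (𝓝 0)) (hg : LipschitzWith K g)
    (hκ : ∀ t u, |g u| ≤ κ * q t) (hφ : IsGlobalFlow (dampedField q (travellingForce g)) φ)
    (t : ℝ) : Function.Injective (straightening a (travellingForce g) φ t) := by
  have hF : ∀ t x, |travellingForce g t x| ≤ κ * q t := fun t x ↦ hκ t _
  have hFc := continuous_travellingForce hg.continuous
  intro x y heq
  by_contra hne
  wlog hlt : x < y generalizing x y
  · exact this heq.symm (Ne.symm hne) (lt_of_le_of_ne (not_lt.1 hlt) (Ne.symm hne))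
  have hasymp : ∀ z s, |φ t z s -
      Real.exp (a t) * straightening a (travellingForce g) φ t z * Real.exp (-a s)| ≤ κ := by
    intro z s
    have h := eq_mul_exp_neg_of_hasDerivAt ha
      (hasDerivAt_straightening ha haBot hF hFc hφ (hφ.isIntegralCurve t z)) t s
    rw [hφ.initial] at h
    rw [← h, abs_sub_comm]
    exact abs_straightening_sub_le ha haBot hF s _
  refine not_lt_of_asymptotic hq₀ ha haBot hqd hq hq' hg (hκ 0) (hφ.isIntegralCurve t x)
    (hφ.isIntegralCurve t y) (hasymp x) (heq ▸ hasymp y) fun s ↦ ?_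
  exact lt_of_lt_of_isIntegralCurve_dampedField ha (lipschitzWith_travellingForce hg)
    (hφ.isIntegralCurve t x) (hφ.isIntegralCurve t y)
    ((hφ.initial t x).trans_lt (hlt.trans_eq (hφ.initial t y).symm)) s

end Straightening

section Conjugacy

variable {E : Type*} [NormedAddCommGroup E] [NormedSpace ℝ E] {v w : ℝ → E → E}

/-- Topological conjugacy of the equations `x' = v(t, x)` and `y' = w(t, y)`: a family `H t` of
homeomorphisms with inverses `G t`, uniformly close to the identity, such that `H` and `G`
exchange the solutions of the two equations. -/
def TopologicallyConjugate (v w : ℝ → E → E) : Prop :=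
  ∃ H G : ℝ → E → E,
    (∀ t, Continuous (H t)) ∧
    (∀ t, Continuous (G t)) ∧
    (∀ t z, G t (H t z) = z) ∧
    (∀ t z, H t (G t z) = z) ∧
    (∃ C, ∀ t z, ‖H t z - z‖ ≤ C) ∧
    (∃ C, ∀ t z, ‖G t z - z‖ ≤ C) ∧
    (∀ x, IsIntegralCurve x v → IsIntegralCurve (fun t ↦ H t (x t)) w) ∧
    (∀ y, IsIntegralCurve y w → IsIntegralCurve (fun t ↦ G t (y t)) v)

theorem topologicallyConjugate_of_homeomorph {C : ℝ} (H : ℝ → E ≃ₜ E)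
    (hC : ∀ t z, ‖H t z - z‖ ≤ C) (t₀ : ℝ)
    (hv : ∀ z, ∃ x, x t₀ = z ∧ IsIntegralCurve x v)
    (hw : ∀ {y₁ y₂}, IsIntegralCurve y₁ w → IsIntegralCurve y₂ w → y₁ t₀ = y₂ t₀ → y₁ = y₂)
    (hH : ∀ x, IsIntegralCurve x v → IsIntegralCurve (fun t ↦ H t (x t)) w) :
    TopologicallyConjugate v w := by
  refine ⟨fun t ↦ H t, fun t ↦ (H t).symm, fun t ↦ (H t).continuous, fun t ↦ (H t).symm.continuous,
    fun t ↦ (H t).symm_apply_apply, fun t ↦ (H t).apply_symm_apply, ⟨C, hC⟩,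
    ⟨C, fun t z ↦ ?_⟩, hH, fun y hy ↦ ?_⟩
  · simpa only [Homeomorph.apply_symm_apply, norm_sub_rev] using hC t ((H t).symm z)
  · obtain ⟨x, hx₀, hx⟩ := hv ((H t₀).symm (y t₀))
    have hxy : (fun t ↦ H t (x t)) = y :=
      hw (hH x hx) hy (by simp only [hx₀, Homeomorph.apply_symm_apply])
    simpa only [← hxy, Homeomorph.symm_apply_apply] using hx

end Conjugacy

section SkewProduct

lemma hasDerivAt_euclideanSpace_iff {ι : Type*} [Fintype ι] {x : ℝ → EuclideanSpace ℝ ι}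
    {x' : EuclideanSpace ℝ ι} {t : ℝ} :
    HasDerivAt x x' t ↔ ∀ i, HasDerivAt (fun s ↦ x s i) (x' i) t := by
  simp only [hasDerivAt_iff_hasFDerivAt, ← hasFDerivWithinAt_univ]
  rw [hasFDerivWithinAt_euclidean]
  refine forall_congr' fun i ↦ ?_
  rw [ContinuousLinearMap.comp_toSpanSingleton, PiLp.proj_apply]

lemma euclideanSpace_norm_le_add (z : EuclideanSpace ℝ (Fin 2)) : ‖z‖ ≤ |z 0| + |z 1| := by
  rw [EuclideanSpace.norm_eq, Fin.sum_univ_two, Real.norm_eq_abs, Real.norm_eq_abs]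
  exact Real.sqrt_le_iff.2 ⟨by positivity, by nlinarith [abs_nonneg (z 0), abs_nonneg (z 1)]⟩

lemma euclideanSpace_ext_two {z w : EuclideanSpace ℝ (Fin 2)} (h₀ : z 0 = w 0) (h₁ : z 1 = w 1) :
    z = w :=
  PiLp.ext (Fin.forall_fin_two.2 ⟨h₀, h₁⟩)

/-- The homeomorphism `(x, y) ↦ (e x, y - u x)` of the plane. -/
noncomputable def shearHomeomorph (e : ℝ ≃ₜ ℝ) {u : ℝ → ℝ} (hu : Continuous u) :
    EuclideanSpace ℝ (Fin 2) ≃ₜ EuclideanSpace ℝ (Fin 2) where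
  toFun z := !₂[e (z 0), z 1 - u (z 0)]
  invFun z := !₂[e.symm (z 0), z 1 + u (e.symm (z 0))]
  left_inv z := euclideanSpace_ext_two (by simp) (by simp)
  right_inv z := euclideanSpace_ext_two (by simp) (by simp)
  continuous_toFun := by fun_prop
  continuous_invFun := by fun_prop

@[simp]
lemma shearHomeomorph_apply_zero (e : ℝ ≃ₜ ℝ) {u : ℝ → ℝ} (hu : Continuous u)
    (z : EuclideanSpace ℝ (Fin 2)) : shearHomeomorph e hu z 0 = e (z 0) := rfl

@[simp]
lemma shearHomeomorph_apply_one (e : ℝ ≃ₜ ℝ) {u : ℝ → ℝ} (hu : Continuous u)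
    (z : EuclideanSpace ℝ (Fin 2)) : shearHomeomorph e hu z 1 = z 1 - u (z 0) := rfl

/-- The field of the skew product `x' = -q₁(t) x + F(t, x)`, `y' = q₂(t) y + k(t, x)`. -/
noncomputable def skewField (q₁ q₂ : ℝ → ℝ) (F k : ℝ → ℝ → ℝ) (t : ℝ)
    (z : EuclideanSpace ℝ (Fin 2)) : EuclideanSpace ℝ (Fin 2) :=
  !₂[dampedField q₁ F t (z 0), q₂ t * z 1 + k t (z 0)]

variable {a₁ a₂ q₁ q₂ : ℝ → ℝ} {F k : ℝ → ℝ → ℝ} {K : ℝ≥0} {κ₁ κ₂ : ℝ}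
  {x x₁ x₂ : ℝ → EuclideanSpace ℝ (Fin 2)}

lemma isIntegralCurve_skewField_iff :
    IsIntegralCurve x (skewField q₁ q₂ F k) ↔
      IsIntegralCurve (fun t ↦ x t 0) (dampedField q₁ F) ∧
        ∀ t, HasDerivAt (fun t ↦ x t 1) (q₂ t * x t 1 + k t (x t 0)) t := by
  simp only [IsIntegralCurve, hasDerivAt_euclideanSpace_iff, Fin.forall_fin_two, forall_and]
  rfl

lemma eq_of_isIntegralCurve_skewField (ha₁ : ∀ t, HasDerivAt a₁ (q₁ t) t)
    (ha₂ : ∀ t, HasDerivAt a₂ (q₂ t) t) (hF : ∀ t, LipschitzWith K (F t))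
    (h₁ : IsIntegralCurve x₁ (skewField q₁ q₂ F k)) (h₂ : IsIntegralCurve x₂ (skewField q₁ q₂ F k))
    {t : ℝ} (ht : x₁ t = x₂ t) : x₁ = x₂ := by
  rw [isIntegralCurve_skewField_iff] at h₁ h₂
  have h₀ : (fun t ↦ x₁ t 0) = fun t ↦ x₂ t 0 :=
    eq_of_isIntegralCurve_dampedField ha₁ hF h₁.1 h₂.1 (congrArg (· 0) ht)
  have hcurve : ∀ {x : ℝ → EuclideanSpace ℝ (Fin 2)},
      (∀ t, HasDerivAt (fun t ↦ x t 1) (q₂ t * x t 1 + k t (x t 0)) t) →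
      (fun t ↦ x t 0) = (fun t ↦ x₂ t 0) →
      IsIntegralCurve (fun t ↦ x t 1) (dampedField (-q₂) fun t _ ↦ k t (x₂ t 0)) := by
    intro x hx hx₀ t
    refine (hx t).congr_deriv ?_
    rw [dampedField, Pi.neg_apply, neg_neg, smul_eq_mul, congrFun hx₀ t]
  have h₁' : (fun t ↦ x₁ t 1) = fun t ↦ x₂ t 1 :=
    eq_of_isIntegralCurve_dampedField (fun t ↦ (ha₂ t).neg) (fun _ ↦ LipschitzWith.const _)
      (hcurve h₁.2 h₀) (hcurve h₂.2 rfl) (congrArg (· 1) ht)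
  exact funext fun t ↦ euclideanSpace_ext_two (congrFun h₀ t) (congrFun h₁' t)

section

variable {φ : ℝ → ℝ → ℝ → ℝ}
  (ha₂ : ∀ t, HasDerivAt a₂ (q₂ t) t) (haTop : Tendsto a₂ atTop atTop)
  (hk : ∀ t x, |k t x| ≤ κ₂ * q₂ t) (hkc : Continuous fun p : ℝ × ℝ ↦ k p.1 p.2)
  (hφ : IsGlobalFlow (dampedField q₁ F) φ)
include ha₂ haTop hk hkc hφ

lemma exists_isIntegralCurve_skewField (t₀ : ℝ) (z : EuclideanSpace ℝ (Fin 2)) :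
    ∃ x, x t₀ = z ∧ IsIntegralCurve x (skewField q₁ q₂ F k) := by
  let b : ℝ → ℝ := fun t ↦ k t (φ t₀ (z 0) t)
  have hφc := hφ.isIntegralCurve t₀ (z 0)
  have hb : Continuous b := hkc.comp (continuous_id.prodMk hφc.continuous)
  have hu := hasDerivAt_unstableResponse ha₂ (b := b) (fun t ↦ hk t _) hb haTop
  refine ⟨fun t ↦ !₂[φ t₀ (z 0) t, unstableResponse a₂ b t +
    Real.exp (a₂ t) * (Real.exp (-a₂ t₀) * (z 1 - unstableResponse a₂ b t₀))],
    euclideanSpace_ext_two (hφ.initial t₀ _) ?_,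
    isIntegralCurve_skewField_iff.2 ⟨hφc, fun t ↦ ?_⟩⟩
  · change _ + _ = _
    rw [← mul_assoc, ← Real.exp_add, add_neg_cancel, Real.exp_zero, one_mul, add_sub_cancel]
  · refine ((hu t).add ((ha₂ t).exp.mul_const _)).congr_deriv ?_
    simp only [Matrix.cons_val_zero, Matrix.cons_val_one, b]
    ring

theorem topologicallyConjugate_skewField (ha₁ : ∀ t, HasDerivAt a₁ (q₁ t) t)
    (haBot : Tendsto a₁ atBot atBot) (hF : ∀ t x, |F t x| ≤ κ₁ * q₁ t)
    (hFc : Continuous fun p : ℝ × ℝ ↦ F p.1 p.2)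
    (hinj : ∀ t, Function.Injective (straightening a₁ F φ t)) :
    TopologicallyConjugate (skewField q₁ q₂ F k) (skewField q₁ q₂ 0 0) := by
  choose e he using fun t ↦ exists_homeomorph_of_injective_of_abs_sub_le
    (continuous_straightening ha₁ haBot hF hFc hφ t) (hinj t)
    (abs_straightening_sub_le ha₁ haBot hF t)
  have hu : ∀ t, Continuous fun x ↦ unstableResponse a₂ (fun s ↦ k s (φ t x s)) t := fun t ↦
    continuous_unstableResponse ha₂ (fun x s ↦ hk s (φ t x s))
      (fun x ↦ hkc.comp (continuous_id.prodMk (hφ.isIntegralCurve t x).continuous))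
      (fun s ↦ hkc.comp (continuous_const.prodMk (hφ.continuous t s))) haTop t
  refine topologicallyConjugate_of_homeomorph (C := κ₁ + κ₂) (fun t ↦ shearHomeomorph (e t) (hu t))
    (fun t z ↦ ?_) 0 (exists_isIntegralCurve_skewField ha₂ haTop hk hkc hφ 0)
    (fun h₁ h₂ ↦ eq_of_isIntegralCurve_skewField ha₁ ha₂ (fun _ ↦ LipschitzWith.const 0) h₁ h₂)
    fun x hx ↦ ?_
  · refine (euclideanSpace_norm_le_add _).trans (add_le_add ?_ ?_)
    · simpa [he] using abs_straightening_sub_le ha₁ haBot hF t (z 0)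
    · simpa using
        abs_unstableResponse_le ha₂ (fun s ↦ hk s (φ t (z 0) s)) haTop t
  · rw [isIntegralCurve_skewField_iff] at hx ⊢
    refine ⟨fun t ↦ ?_, fun t ↦ ?_⟩
    · simpa [he, dampedField] using
        hasDerivAt_straightening ha₁ haBot hF hFc hφ hx.1 t
    · have h := (hx.2 t).sub (hasDerivAt_unstableResponse ha₂ (fun s ↦ hk s (x s 0))
        (hkc.comp (continuous_id.prodMk hx.1.continuous)) haTop t)
      simp only [shearHomeomorph_apply_one, hφ.unique hx.1]
      refine h.congr_deriv ?_
      simp only [Pi.zero_apply]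
      ring

end

end SkewProduct

section TravellingForce

lemma tendsto_atBot_of_le_deriv {a q : ℝ → ℝ} {η : ℝ} (hη : 0 < η)
    (ha : ∀ t, HasDerivAt a (q t) t) (hq : ∀ t, η ≤ q t) : Tendsto a atBot atBot := by
  have h := tendsto_atTop_of_le_deriv hη (hasDerivAt_neg_comp_neg ha) (fun t ↦ hq (-t))
  simpa [Function.comp_def] using tendsto_neg_atTop_atBot.comp (h.comp tendsto_neg_atBot_atTop)

theorem topologicallyConjugate_skewField_travellingForce {a₁ a₂ q₁ q₂ g : ℝ → ℝ}
    {k : ℝ → ℝ → ℝ} {K : ℝ≥0} {m M q₀ : ℝ} (hm : 0 < m)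
    (ha₁ : ∀ t, HasDerivAt a₁ (q₁ t) t) (hm₁ : ∀ t, m ≤ q₁ t)
    (ha₂ : ∀ t, HasDerivAt a₂ (q₂ t) t) (hm₂ : ∀ t, m ≤ q₂ t)
    (hqd : Differentiable ℝ q₁) (hq : Tendsto q₁ atBot (𝓝 q₀))
    (hq' : Tendsto (deriv q₁) atBot (𝓝 0)) (hg : LipschitzWith K g) (hgM : ∀ u, |g u| ≤ M)
    (hkc : Continuous fun p : ℝ × ℝ ↦ k p.1 p.2) (hkM : ∀ t x, |k t x| ≤ M) :
    TopologicallyConjugate (skewField q₁ q₂ (travellingForce g) k) (skewField q₁ q₂ 0 0) := by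
  have hM : ∀ {q}, m ≤ q → M ≤ M / m * q := fun {q} hq ↦ by
    rw [div_mul_eq_mul_div, le_div_iff₀ hm]
    exact mul_le_mul_of_nonneg_left hq ((abs_nonneg _).trans (hgM 0))
  have hκ₁ : ∀ t u, |g u| ≤ M / m * q₁ t := fun t u ↦ (hgM u).trans (hM (hm₁ t))
  have haBot := tendsto_atBot_of_le_deriv hm ha₁ hm₁
  have hFc := continuous_travellingForce hg.continuous
  obtain ⟨φ, hφ⟩ := exists_isGlobalFlow_dampedField ha₁ (lipschitzWith_travellingForce hg) hFc
    (fun t x ↦ hgM (x + t))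
  exact topologicallyConjugate_skewField ha₂ (tendsto_atTop_of_le_deriv hm ha₂ hm₂)
    (fun t x ↦ (hkM t x).trans (hM (hm₂ t))) hkc hφ ha₁ haBot (fun t _ ↦ hκ₁ t _) hFc
    (straightening_injective (hm.trans_le (ge_of_tendsto' hq hm₁)) ha₁ haBot hqd hq hq' hg hκ₁ hφ)

end TravellingForce

section ArctanGrowthRate

lemma pi_div_two_add_arctan_pos (t : ℝ) : 0 < Real.pi / 2 + Real.arctan t := by
  linarith [Real.neg_pi_div_two_lt_arctan t]

lemma tendsto_mul_pi_div_two_add_arctan_atBot :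
    Tendsto (fun t ↦ t * (Real.pi / 2 + Real.arctan t)) atBot (𝓝 (-1)) := by
  have hslope : Tendsto (slope Real.arctan 0) (𝓝[≠] 0) (𝓝 1) := by
    simpa using hasDerivAt_iff_tendsto_slope.1 (Real.hasDerivAt_arctan 0)
  have hinv : Tendsto (fun t : ℝ ↦ t⁻¹) atBot (𝓝[≠] 0) :=
    tendsto_inv_atBot_nhdsLT_zero.mono_right (nhdsWithin_mono _ fun _ h ↦ ne_of_lt h)
  refine (hslope.comp hinv).neg.congr' ?_
  filter_upwards [eventually_lt_atBot 0] with t ht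
  simp only [Function.comp_apply, slope_def_field, Real.arctan_zero, Real.arctan_inv_of_neg ht,
    sub_zero, div_inv_eq_mul]
  ring

lemma tendsto_one_add_sq_mul_pi_div_two_add_arctan_atBot :
    Tendsto (fun t ↦ (1 + t ^ 2) * (Real.pi / 2 + Real.arctan t)) atBot atTop := by
  refine tendsto_atTop_mono (fun t ↦ ?_) (tendsto_id.atBot_mul_neg neg_one_lt_zero
    tendsto_mul_pi_div_two_add_arctan_atBot)
  have := pi_div_two_add_arctan_pos t
  simp only [id_eq]
  nlinarith

/-- The growth rate `μ(t) = (2/π) eᵗ (π/2 + arctan t)`. -/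
noncomputable def arctanGrowthRate (t : ℝ) : ℝ :=
  2 / Real.pi * Real.exp t * (Real.pi / 2 + Real.arctan t)

lemma arctanGrowthRate_pos (t : ℝ) : 0 < arctanGrowthRate t := by
  have := pi_div_two_add_arctan_pos t
  unfold arctanGrowthRate
  positivity

lemma hasDerivAt_arctanGrowthRate (t : ℝ) :
    HasDerivAt arctanGrowthRate
      (arctanGrowthRate t * (1 + ((1 + t ^ 2) * (Real.pi / 2 + Real.arctan t))⁻¹)) t := by
  have hα := (pi_div_two_add_arctan_pos t).ne'
  refine (((Real.hasDerivAt_exp t).const_mul (2 / Real.pi)).mul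
    ((Real.hasDerivAt_arctan t).const_add (Real.pi / 2))).congr_deriv ?_
  have ht : 1 + t ^ 2 ≠ 0 := by positivity
  rw [arctanGrowthRate]
  generalize Real.pi / 2 + Real.arctan t = α at hα
  field_simp

lemma logDeriv_arctanGrowthRate : logDeriv arctanGrowthRate =
    fun t ↦ 1 + ((1 + t ^ 2) * (Real.pi / 2 + Real.arctan t))⁻¹ := by
  funext t
  rw [logDeriv_apply, (hasDerivAt_arctanGrowthRate t).deriv,
    mul_div_cancel_left₀ _ (arctanGrowthRate_pos t).ne']

lemma hasDerivAt_log_arctanGrowthRate (t : ℝ) :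
    HasDerivAt (fun t ↦ Real.log (arctanGrowthRate t)) (logDeriv arctanGrowthRate t) t :=
  (hasDerivAt_arctanGrowthRate t).differentiableAt.hasDerivAt.log (arctanGrowthRate_pos t).ne'

lemma one_le_logDeriv_arctanGrowthRate (t : ℝ) : 1 ≤ logDeriv arctanGrowthRate t := by
  have := pi_div_two_add_arctan_pos t
  rw [logDeriv_arctanGrowthRate]
  exact le_add_of_nonneg_right (by positivity)

lemma hasDerivAt_logDeriv_arctanGrowthRate (t : ℝ) :
    HasDerivAt (logDeriv arctanGrowthRate)
      (-(2 * (t * (Real.pi / 2 + Real.arctan t)) + 1) *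
        ((1 + t ^ 2) * (Real.pi / 2 + Real.arctan t))⁻¹ ^ 2) t := by
  have ht : 1 + t ^ 2 ≠ 0 := by positivity
  rw [logDeriv_arctanGrowthRate]
  refine (((((hasDerivAt_id t).fun_pow 2).const_add 1).mul ((Real.hasDerivAt_arctan t).const_add
    (Real.pi / 2))).inv (mul_ne_zero ht (pi_div_two_add_arctan_pos t).ne')).const_add 1
    |>.congr_deriv ?_
  simp only [id_eq, Pi.mul_apply]
  field_simp
  ring

lemma tendsto_logDeriv_arctanGrowthRate_atBot :
    Tendsto (logDeriv arctanGrowthRate) atBot (𝓝 1) := by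
  rw [logDeriv_arctanGrowthRate]
  simpa using tendsto_one_add_sq_mul_pi_div_two_add_arctan_atBot.inv_tendsto_atTop.const_add 1

lemma tendsto_deriv_logDeriv_arctanGrowthRate_atBot :
    Tendsto (deriv (logDeriv arctanGrowthRate)) atBot (𝓝 0) := by
  simp only [funext fun t ↦ (hasDerivAt_logDeriv_arctanGrowthRate t).deriv]
  simpa using ((tendsto_mul_pi_div_two_add_arctan_atBot.const_mul 2).add_const 1).neg.mul
    (tendsto_one_add_sq_mul_pi_div_two_add_arctan_atBot.inv_tendsto_atTop.pow 2)

end ArctanGrowthRate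

/-- The clockwise parametrization `θ ↦ (sin θ, cos θ)` of the unit circle. -/
noncomputable def circlePoint (θ : ℝ) : EuclideanSpace ℝ (Fin 2) := !₂[Real.sin θ, Real.cos θ]

lemma norm_circlePoint (θ : ℝ) : ‖circlePoint θ‖ = 1 := by
  simp [circlePoint, EuclideanSpace.norm_eq]

lemma lipschitzWith_circlePoint : LipschitzWith 1 circlePoint := by
  refine LipschitzWith.of_dist_le_mul fun α β ↦ ?_
  rw [NNReal.coe_one, one_mul, Real.dist_eq, EuclideanSpace.dist_eq, Fin.sum_univ_two]
  refine Real.sqrt_le_iff.2 ⟨abs_nonneg _, ?_⟩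
  have hcos := Real.one_sub_sq_div_two_le_cos (x := α - β)
  rw [Real.cos_sub] at hcos
  simp only [circlePoint, Real.dist_eq, sq_abs, Matrix.cons_val_zero, Matrix.cons_val_one]
  linarith [Real.sin_sq_add_cos_sq α, Real.sin_sq_add_cos_sq β]

theorem topologicallyConjugate_skewField_arctanGrowthRate {η₁ η₂ : ℝ} (hη₁ : 0 < η₁)
    (hη₂ : 0 < η₂) (ε : ℝ) :
    TopologicallyConjugate
      (skewField (fun t ↦ η₁ * logDeriv arctanGrowthRate t)
        (fun t ↦ η₂ * logDeriv arctanGrowthRate t)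
        (travellingForce fun u ↦ ε * Real.sin u) (fun t x ↦ ε * Real.cos (x + t)))
      (skewField (fun t ↦ η₁ * logDeriv arctanGrowthRate t)
        (fun t ↦ η₂ * logDeriv arctanGrowthRate t) 0 0) := by
  have hlog := hasDerivAt_log_arctanGrowthRate
  have hone := one_le_logDeriv_arctanGrowthRate
  have hp : Differentiable ℝ (logDeriv arctanGrowthRate) := fun t ↦
    (hasDerivAt_logDeriv_arctanGrowthRate t).differentiableAt
  refine topologicallyConjugate_skewField_travellingForce (M := |ε|) (lt_min hη₁ hη₂)
    (fun t ↦ (hlog t).const_mul η₁)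
    (fun t ↦ (min_le_left _ _).trans (le_mul_of_one_le_right hη₁.le (hone t)))
    (fun t ↦ (hlog t).const_mul η₂)
    (fun t ↦ (min_le_right _ _).trans (le_mul_of_one_le_right hη₂.le (hone t)))
    (hp.const_mul η₁) (tendsto_logDeriv_arctanGrowthRate_atBot.const_mul η₁) ?_
    ((lipschitzWith_smul ε).comp Real.lipschitzWith_sin) (fun u ↦ ?_) (by fun_prop) (fun t x ↦ ?_)
  · simpa [deriv_const_mul_field'] using
      tendsto_deriv_logDeriv_arctanGrowthRate_atBot.const_mul η₁
  · rw [abs_mul]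
    exact mul_le_of_le_one_right (abs_nonneg ε) (Real.abs_sin_le_one u)
  · rw [abs_mul]
    exact mul_le_of_le_one_right (abs_nonneg ε) (Real.abs_cos_le_one _)

theorem example_system_topologically_conjugate_general
    (η₁ η₂ ε : ℝ) (hη₁ : 0 < η₁) (hη₂ : 0 < η₂)
    (μ : ℝ → ℝ)
    (hμ : ∀ t, μ t = (2 / Real.pi) * Real.exp t * (Real.pi / 2 + Real.arctan t))
    (f : ℝ → EuclideanSpace ℝ (Fin 2) → EuclideanSpace ℝ (Fin 2))
    (hf : ∀ t (z : EuclideanSpace ℝ (Fin 2)),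
      f t z 0 = ε * Real.sin (z 0 + t) ∧ f t z 1 = ε * Real.cos (z 0 + t))
    (A : ℝ → EuclideanSpace ℝ (Fin 2) →L[ℝ] EuclideanSpace ℝ (Fin 2))
    (hA : ∀ t (z : EuclideanSpace ℝ (Fin 2)),
      A t z 0 = -η₁ * (deriv μ t / μ t) * z 0 ∧ A t z 1 = η₂ * (deriv μ t / μ t) * z 1) :
    (∀ t z, ‖f t z‖ ≤ 2 * |ε| * (deriv μ t / μ t)) ∧
    (∀ t z₁ z₂, ‖f t z₁ - f t z₂‖ ≤ 2 * |ε| * (deriv μ t / μ t) * ‖z₁ - z₂‖) ∧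
    TopologicallyConjugate (fun t z ↦ A t z + f t z) (fun t z ↦ A t z) := by
  obtain rfl : μ = arctanGrowthRate := funext hμ
  simp only [← logDeriv_apply] at hA ⊢
  have hp : ∀ t, 1 ≤ logDeriv arctanGrowthRate t := one_le_logDeriv_arctanGrowthRate
  have hf' : f = fun t z ↦ ε • circlePoint (z 0 + t) := funext₂ fun t z ↦
    euclideanSpace_ext_two (hf t z).1 (hf t z).2
  have hε : ∀ t, |ε| ≤ 2 * |ε| * logDeriv arctanGrowthRate t := fun t ↦ by
    nlinarith [hp t, abs_nonneg ε]
  refine ⟨fun t z ↦ ?_, fun t z₁ z₂ ↦ ?_, ?_⟩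
  · simpa [hf', norm_smul, norm_circlePoint] using hε t
  · calc ‖f t z₁ - f t z₂‖
        = |ε| * ‖circlePoint (z₁ 0 + t) - circlePoint (z₂ 0 + t)‖ := by
          rw [hf', ← smul_sub, norm_smul, Real.norm_eq_abs]
      _ ≤ |ε| * ‖z₁ - z₂‖ := by
          gcongr
          refine (lipschitzWith_circlePoint.norm_sub_le _ _).trans ?_
          simpa using PiLp.norm_apply_le (z₁ - z₂) 0
      _ ≤ _ := by gcongr; exact hε t
  · convert topologicallyConjugate_skewField_arctanGrowthRate hη₁ hη₂ ε with t z t z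
    · exact euclideanSpace_ext_two
        (by simp [hA, hf, skewField, dampedField, travellingForce])
        (by simp [hA, hf, skewField])
    · exact euclideanSpace_ext_two
        (by simp [hA, skewField, dampedField]) (by simp [hA, skewField])

theorem example_system_topologically_conjugate
    (η₁ η₂ ε : ℝ) (hη₁ : 0 < η₁) (hη₂ : 0 < η₂) (hε : 0 < ε)
    (μ : ℝ → ℝ)
    (hμ : ∀ t, μ t = (2 / Real.pi) * Real.exp t * (Real.pi / 2 + Real.arctan t))
    (f : ℝ → EuclideanSpace ℝ (Fin 2) → EuclideanSpace ℝ (Fin 2))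
    (hf : ∀ t (z : EuclideanSpace ℝ (Fin 2)),
      f t z 0 = ε * Real.sin (z 0 + t) ∧ f t z 1 = ε * Real.cos (z 0 + t))
    (A : ℝ → EuclideanSpace ℝ (Fin 2) →L[ℝ] EuclideanSpace ℝ (Fin 2))
    (hA : ∀ t (z : EuclideanSpace ℝ (Fin 2)),
      A t z 0 = -η₁ * (deriv μ t / μ t) * z 0 ∧ A t z 1 = η₂ * (deriv μ t / μ t) * z 1) :
    (∀ t z, ‖f t z‖ ≤ 2 * ε * (deriv μ t / μ t)) ∧
    (∀ t z₁ z₂, ‖f t z₁ - f t z₂‖ ≤ 2 * ε * (deriv μ t / μ t) * ‖z₁ - z₂‖) ∧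
    (ε < max η₁ η₂ / 8 →
      ∃ H G : ℝ → EuclideanSpace ℝ (Fin 2) → EuclideanSpace ℝ (Fin 2),
        (∀ t, Continuous (H t)) ∧
        (∀ t, Continuous (G t)) ∧
        (∀ t z, G t (H t z) = z) ∧
        (∀ t z, H t (G t z) = z) ∧
        (∃ C, ∀ t z, ‖H t z - z‖ ≤ C) ∧
        (∃ C, ∀ t z, ‖G t z - z‖ ≤ C) ∧
        (∀ x : ℝ → EuclideanSpace ℝ (Fin 2),
          (∀ t, HasDerivAt x (A t (x t) + f t (x t)) t) →
          ∀ t, HasDerivAt (fun r => H r (x r)) (A t (H t (x t))) t) ∧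
        (∀ y : ℝ → EuclideanSpace ℝ (Fin 2),
          (∀ t, HasDerivAt y (A t (y t)) t) →
          ∀ t, HasDerivAt (fun r => G r (y r)) (A t (G t (y t)) + f t (G t (y t))) t)) := by
  obtain ⟨hf_le, hf_sub_le, hconj⟩ :=
    example_system_topologically_conjugate_general η₁ η₂ ε hη₁ hη₂ μ hμ f hf A hA
  exact ⟨abs_of_pos hε ▸ hf_le, abs_of_pos hε ▸ hf_sub_le, fun _ ↦ hconj⟩
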